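/- For every real s > 2, the sum of (m² − 2k²)/(m² + 2k²)^s over all pairs (k,m) ∈ ℤ² with 3 | k and 3 ∤ m, plus the sum of (m² − 2k²)/(m² + 2k²)^s over all pairs (k,m) ∈ ℤ² with 3 ∤ k and 3 | m, equals (1 + 2·3^{−s} + 9·3^{−2s}) · ∑'_{(k,m)} (m² − 2k²)/(m² + 2k²)^s. -/

import Mathlib

/-!
Put `z = m + k√-2`, so that the summand is `Re (z²) / N(z)^s`. Since `m² + 2k² ≡ m² - k² mod 3`, the
two sums on the left run together over the `z ∈ ℤ[√-2]` with `3 ∤ N(z)`. As `3 = π π̄` with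
`π = 1 + √-2`, inclusion-exclusion expresses them as the full sum, minus the sums over the ideals
`(π)` and `(π̄)`, plus the sum over `(3)` (`indicator_identity`). Multiplication by `π`, `π̄` and `3`
turns the ideal sums into full sums: `Re (π² z²) + Re (π̄² z²) = -2 Re (z²)` gives the factor
`-2 · 3^{-s}` (`term_mulPi_add_term_mulPiBar`), and `Re ((3z)²) / N(3z)^s` the factor `9 · 3^{-2s}`.
Absolute convergence (`summable_term`) is comparison with `∑ ‖(k, m)‖^{-2(s-1)}`.
-/

namespace SplitSum

/-- The summand `Re (z²) / N(z)^s` at `z = m + k√-2`, with `q = (k, m)`. It is `0` at the origin. -/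
noncomputable def term (s : ℝ) (q : ℤ × ℤ) : ℝ :=
  ((q.2 : ℝ) ^ 2 - 2 * (q.1 : ℝ) ^ 2) / ((q.2 : ℝ) ^ 2 + 2 * (q.1 : ℝ) ^ 2) ^ s

/-- Multiplication by `π = 1 + √-2` on `m + k√-2`, in the coordinates `(k, m)`. -/
def mulPi (q : ℤ × ℤ) : ℤ × ℤ := (q.2 + q.1, q.2 - 2 * q.1)

/-- Multiplication by `π̄ = 1 - √-2` on `m + k√-2`, in the coordinates `(k, m)`. -/
def mulPiBar (q : ℤ × ℤ) : ℤ × ℤ := (q.1 - q.2, q.2 + 2 * q.1)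

/-- Multiplication by `3`, in the coordinates `(k, m)`. -/
def mulThree (q : ℤ × ℤ) : ℤ × ℤ := (3 * q.1, 3 * q.2)

lemma mulPi_injective : Function.Injective mulPi := by
  rintro ⟨a, b⟩ ⟨c, d⟩ h
  simp only [mulPi, Prod.mk.injEq] at h ⊢
  omega

lemma mulPiBar_injective : Function.Injective mulPiBar := by
  rintro ⟨a, b⟩ ⟨c, d⟩ h
  simp only [mulPiBar, Prod.mk.injEq] at h ⊢
  omega

lemma mulThree_injective : Function.Injective mulThree := by
  rintro ⟨a, b⟩ ⟨c, d⟩ h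
  simp only [mulThree, Prod.mk.injEq] at h ⊢
  omega

lemma mem_range_mulPi (q : ℤ × ℤ) : q ∈ Set.range mulPi ↔ 3 ∣ q.1 - q.2 := by
  obtain ⟨k, m⟩ := q
  simp only [Set.mem_range, mulPi, Prod.exists, Prod.mk.injEq]
  constructor
  · rintro ⟨a, b, h1, h2⟩
    omega
  · rintro ⟨c, hc⟩
    exact ⟨c, k - c, by omega, by omega⟩

lemma mem_range_mulPiBar (q : ℤ × ℤ) : q ∈ Set.range mulPiBar ↔ 3 ∣ q.1 + q.2 := by
  obtain ⟨k, m⟩ := q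
  simp only [Set.mem_range, mulPiBar, Prod.exists, Prod.mk.injEq]
  constructor
  · rintro ⟨a, b, h1, h2⟩
    omega
  · rintro ⟨c, hc⟩
    exact ⟨c, c - k, by omega, by omega⟩

lemma mem_range_mulThree (q : ℤ × ℤ) : q ∈ Set.range mulThree ↔ 3 ∣ q.1 ∧ 3 ∣ q.2 := by
  obtain ⟨k, m⟩ := q
  simp only [Set.mem_range, mulThree, Prod.exists, Prod.mk.injEq]
  constructor
  · rintro ⟨a, b, h1, h2⟩
    omega
  · rintro ⟨⟨c, hc⟩, ⟨d, hd⟩⟩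
    exact ⟨c, d, hc.symm, hd.symm⟩

lemma term_mulPi_add_term_mulPiBar (s : ℝ) (q : ℤ × ℤ) :
    term s (mulPi q) + term s (mulPiBar q) = -2 * (3 : ℝ) ^ (-s) * term s q := by
  obtain ⟨k, m⟩ := q
  have hN : 0 ≤ (m : ℝ) ^ 2 + 2 * (k : ℝ) ^ 2 := by positivity
  simp only [term, mulPi, mulPiBar]
  push_cast
  rw [show ((m : ℝ) - 2 * k) ^ 2 + 2 * (m + k) ^ 2 = 3 * (m ^ 2 + 2 * k ^ 2) by ring,
    show ((m : ℝ) + 2 * k) ^ 2 + 2 * (k - m) ^ 2 = 3 * (m ^ 2 + 2 * k ^ 2) by ring,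
    Real.mul_rpow (by norm_num) hN, Real.rpow_neg (by norm_num)]
  simp only [div_eq_mul_inv, mul_inv]
  ring

lemma term_mulThree (s : ℝ) (q : ℤ × ℤ) :
    term s (mulThree q) = 9 * (3 : ℝ) ^ (-2 * s) * term s q := by
  obtain ⟨k, m⟩ := q
  have hN : 0 ≤ (m : ℝ) ^ 2 + 2 * (k : ℝ) ^ 2 := by positivity
  have h9 : (3 : ℝ) ^ (-2 * s) = ((9 : ℝ) ^ s)⁻¹ := by
    rw [show -2 * s = -(2 * s) by ring, Real.rpow_neg (by norm_num), Real.rpow_mul (by norm_num)]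
    norm_num
  simp only [term, mulThree]
  push_cast
  rw [show (3 * (m : ℝ)) ^ 2 + 2 * (3 * k) ^ 2 = 9 * (m ^ 2 + 2 * k ^ 2) by ring,
    Real.mul_rpow (by norm_num) hN, h9]
  simp only [div_eq_mul_inv, mul_inv]
  ring

lemma summable_term (s : ℝ) (hs : 2 < s) : Summable (term s) := by
  have h := EisensteinSeries.summable_one_div_norm_rpow (k := 2 * (s - 1)) (by linarith)
  rw [← (finTwoArrowEquiv ℤ).symm.summable_iff] at h
  refine Summable.of_norm_bounded h ?_
  rintro ⟨k, m⟩
  simp only [Function.comp, finTwoArrowEquiv_symm_apply, term]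
  set N : ℝ := (m : ℝ) ^ 2 + 2 * (k : ℝ) ^ 2 with hN
  have hN0 : 0 ≤ N := by positivity
  rcases hN0.eq_or_lt with h0 | h0
  -- at the origin the numerator vanishes
  · have hk : (k : ℝ) ^ 2 = 0 := by nlinarith [sq_nonneg (k : ℝ), sq_nonneg (m : ℝ)]
    have hm : (m : ℝ) ^ 2 = 0 := by nlinarith [sq_nonneg (k : ℝ), sq_nonneg (m : ℝ)]
    rw [hk, hm]
    simp only [mul_zero, sub_zero, zero_div, norm_zero]
    positivity
  · have hv : ‖(![k, m] : Fin 2 → ℤ)‖ ≤ √N := by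
      rw [pi_norm_le_iff_of_nonneg (Real.sqrt_nonneg _)]
      intro i
      apply Real.le_sqrt_of_sq_le
      fin_cases i
      · simp [Int.norm_eq_abs, hN]
        nlinarith [sq_nonneg (k : ℝ), sq_nonneg (m : ℝ)]
      · simp [Int.norm_eq_abs, hN, sq_nonneg]
    have hvpos : 0 < ‖(![k, m] : Fin 2 → ℤ)‖ := by
      rw [norm_pos_iff]
      intro h
      have hk : k = 0 := congrFun h 0
      have hm : m = 0 := congrFun h 1
      simp [hN, hk, hm] at h0
    rw [norm_div, Real.norm_of_nonneg (Real.rpow_nonneg hN0 s)]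
    calc ‖(m : ℝ) ^ 2 - 2 * (k : ℝ) ^ 2‖ / N ^ s ≤ N / N ^ s := by
          gcongr
          rw [Real.norm_eq_abs, abs_le]
          constructor <;> nlinarith [sq_nonneg (k : ℝ), sq_nonneg (m : ℝ)]
      _ = √N ^ (-(2 * (s - 1))) := by
          rw [Real.sqrt_eq_rpow, ← Real.rpow_mul hN0]
          nth_rewrite 1 [← Real.rpow_one N]
          rw [← Real.rpow_sub h0]
          congr 1
          ring
      _ ≤ ‖(![k, m] : Fin 2 → ℤ)‖ ^ (-(2 * (s - 1))) :=
          Real.rpow_le_rpow_of_nonpos hvpos hv (by linarith)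

/-- Inclusion-exclusion: `3 ∤ N(z)` exactly when `z` lies in neither `(π)` nor `(π̄)`, and
`(π) ∩ (π̄) = (3)`. -/
lemma indicator_identity (f : ℤ × ℤ → ℝ) (q : ℤ × ℤ) :
    {q : ℤ × ℤ | 3 ∣ q.1 ∧ ¬ (3 ∣ q.2)}.indicator f q +
        {q : ℤ × ℤ | ¬ (3 ∣ q.1) ∧ 3 ∣ q.2}.indicator f q =
      f q - ((Set.range mulPi).indicator f q + (Set.range mulPiBar).indicator f q) +
        (Set.range mulThree).indicator f q := by
  classical
  simp only [Set.indicator_apply, mem_range_mulPi, mem_range_mulPiBar, mem_range_mulThree,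
    Set.mem_ofPred_eq]
  have hk : q.1 % 3 = 0 ∨ q.1 % 3 = 1 ∨ q.1 % 3 = 2 := by omega
  have hm : q.2 % 3 = 0 ∨ q.2 % 3 = 1 ∨ q.2 % 3 = 2 := by omega
  split_ifs <;> first | (exfalso; omega) | ring

lemma tsum_indicator_range (f : ℤ × ℤ → ℝ) {g : ℤ × ℤ → ℤ × ℤ} (hg : Function.Injective g) :
    ∑' q, (Set.range g).indicator f q = ∑' q, f (g q) := by
  rw [← tsum_subtype, tsum_range f hg]

end SplitSum

open SplitSum in
theorem split_by_divisibility_sum_identity (s : ℝ) (hs : 2 < s) :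
    (∑' p : {q : ℤ × ℤ // 3 ∣ q.1 ∧ ¬ (3 ∣ q.2)},
        ((p.1.2 : ℝ) ^ 2 - 2 * (p.1.1 : ℝ) ^ 2) /
          ((p.1.2 : ℝ) ^ 2 + 2 * (p.1.1 : ℝ) ^ 2) ^ s) +
      (∑' p : {q : ℤ × ℤ // ¬ (3 ∣ q.1) ∧ 3 ∣ q.2},
        ((p.1.2 : ℝ) ^ 2 - 2 * (p.1.1 : ℝ) ^ 2) /
          ((p.1.2 : ℝ) ^ 2 + 2 * (p.1.1 : ℝ) ^ 2) ^ s) =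
      (1 + 2 * (3 : ℝ) ^ (-s) + 9 * (3 : ℝ) ^ (-2 * s)) *
        ∑' p : {q : ℤ × ℤ // q ≠ 0},
          ((p.1.2 : ℝ) ^ 2 - 2 * (p.1.1 : ℝ) ^ 2) /
            ((p.1.2 : ℝ) ^ 2 + 2 * (p.1.1 : ℝ) ^ 2) ^ s := by
  have hf := summable_term s hs
  have h1 := tsum_subtype {q : ℤ × ℤ | 3 ∣ q.1 ∧ ¬ (3 ∣ q.2)} (term s)
  have h2 := tsum_subtype {q : ℤ × ℤ | ¬ (3 ∣ q.1) ∧ 3 ∣ q.2} (term s)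
  -- the origin contributes `0`, so the sum over nonzero pairs is the sum over all pairs
  have h3 : ∑' p : {q : ℤ × ℤ | q ≠ 0}, term s p = ∑' q, term s q := by
    apply tsum_subtype_eq_of_support_subset
    rintro q hq rfl
    exact hq (by simp [term])
  have key : ∑' q, {q : ℤ × ℤ | 3 ∣ q.1 ∧ ¬ (3 ∣ q.2)}.indicator (term s) q +
        ∑' q, {q : ℤ × ℤ | ¬ (3 ∣ q.1) ∧ 3 ∣ q.2}.indicator (term s) q =
      (1 + 2 * (3 : ℝ) ^ (-s) + 9 * (3 : ℝ) ^ (-2 * s)) * ∑' q, term s q := by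
    have hA := hf.indicator (Set.range mulPi)
    have hB := hf.indicator (Set.range mulPiBar)
    have hC := hf.indicator (Set.range mulThree)
    have hA' : Summable fun q => term s (mulPi q) := hf.comp_injective mulPi_injective
    have hB' : Summable fun q => term s (mulPiBar q) := hf.comp_injective mulPiBar_injective
    rw [← (hf.indicator _).tsum_add (hf.indicator _), tsum_congr (indicator_identity (term s)),
      (hf.sub (hA.add hB)).tsum_add hC, hf.tsum_sub (hA.add hB), hA.tsum_add hB,
      tsum_indicator_range _ mulPi_injective, tsum_indicator_range _ mulPiBar_injective,
      tsum_indicator_range _ mulThree_injective,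
      ← hA'.tsum_add hB',
      tsum_congr (term_mulPi_add_term_mulPiBar s), tsum_congr (term_mulThree s),
      tsum_mul_left, tsum_mul_left]
    ring
  rw [← h1, ← h2, ← h3] at key
  exact key
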